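/- arXiv:2102.02987 — 5 statements merged into one kernel-verified Lean document; each statement's English description precedes it below -/
import Mathlib

section
/- (Proposition 1, per-period form) Let A = U(I₁, s₁, N₁) and B = U(I₂, s₂, N₂) be two ULAs with s₁ ≥ 1 and s₂ > (N₁ − 1)s₁, and set g = I₂ − (I₁ + (N₁−1)s₁). Then the inter-difference coarray {q − p : q ∈ B, p ∈ A} equals {g + j·s₂ + k·s₁ : 0 ≤ j ≤ N₂−1, 0 ≤ k ≤ N₁−1}, and for every j ∈ {0,…,N₂−1} exactly N₁ of its elements d satisfy g + j·s₂ ≤ d < g + (j+1)·s₂; that is, each period of length s₂ contains the same number of coarray elements as the prototype sub-ULA A has sensors. -/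
/-!
Reversing the index of the first array, `k ↦ N₁ - 1 - k`, turns a difference
`(I₂ + j * s₂) - (I₁ + k * s₁)` into `g + j * s₂ + (N₁ - 1 - k) * s₁`, which gives the description
of the coarray. Since `0 ≤ k * s₁ ≤ (N₁ - 1) * s₁ < s₂` for `k < N₁`, the element
`g + j * s₂ + k * s₁` lies in the `j`-th period and in no other one. So the elements in the `j`-th
period are the image of `k ↦ g + j * s₂ + k * s₁` on `{0, …, N₁ - 1}`, an injective map as `s₁ ≠ 0`.
-/

/-- The uniform linear array with initial position `I`, interspace `s` and `N` sensors. -/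
def ULA (I s : ℤ) (N : ℕ) : Finset ℤ :=
  (Finset.range N).image fun k : ℕ => I + (k : ℤ) * s

/-- Inter-difference coarray from `A` to `B`: the set `{q - p : q ∈ B, p ∈ A}`. -/
def idca (A B : Finset ℤ) : Finset ℤ := (B ×ˢ A).image fun p => p.1 - p.2

theorem idca_ULA_eq_image (I₁ s₁ : ℤ) (N₁ : ℕ) (I₂ s₂ : ℤ) (N₂ : ℕ) :
    idca (ULA I₁ s₁ N₁) (ULA I₂ s₂ N₂) =
      (Finset.range N₂ ×ˢ Finset.range N₁).image
        (fun jk : ℕ × ℕ => I₂ - (I₁ + ((N₁ : ℤ) - 1) * s₁) + (jk.1 : ℤ) * s₂ + (jk.2 : ℤ) * s₁) := by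
  ext d
  simp only [idca, ULA, Finset.mem_image, Finset.mem_product, Finset.mem_range, Prod.exists]
  constructor
  · rintro ⟨_, _, ⟨⟨j, hj, rfl⟩, ⟨k, hk, rfl⟩⟩, rfl⟩
    refine ⟨j, N₁ - 1 - k, ⟨hj, by omega⟩, ?_⟩
    have hcast : ((N₁ - 1 - k : ℕ) : ℤ) = N₁ - 1 - k := by omega
    rw [hcast]
    ring
  · rintro ⟨j, k, ⟨hj, hk⟩, rfl⟩
    refine ⟨_, _, ⟨⟨j, hj, rfl⟩, ⟨N₁ - 1 - k, by omega, rfl⟩⟩, ?_⟩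
    have hcast : ((N₁ - 1 - k : ℕ) : ℤ) = N₁ - 1 - k := by omega
    rw [hcast]
    ring

/-- Proposition 1 (per-period form): if `s₂ > (N₁ - 1)·s₁` and
`g = I₂ - (I₁ + (N₁-1)·s₁)`, then the inter-difference coarray from `A` to `B`
equals `{g + j·s₂ + k·s₁ : 0 ≤ j ≤ N₂-1, 0 ≤ k ≤ N₁-1}`, and each period
`[g + j·s₂, g + (j+1)·s₂)` contains exactly `N₁` of its elements. -/
theorem idca_per_period (I₁ s₁ : ℤ) (N₁ : ℕ) (I₂ s₂ : ℤ) (N₂ : ℕ)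
    (hs₁ : 1 ≤ s₁) (hN₁ : 1 ≤ N₁) (hN₂ : 1 ≤ N₂)
    (h : ((N₁ : ℤ) - 1) * s₁ < s₂)
    (g : ℤ) (hg : g = I₂ - (I₁ + ((N₁ : ℤ) - 1) * s₁)) :
    idca (ULA I₁ s₁ N₁) (ULA I₂ s₂ N₂) =
      (Finset.range N₂ ×ˢ Finset.range N₁).image
        (fun jk : ℕ × ℕ => g + (jk.1 : ℤ) * s₂ + (jk.2 : ℤ) * s₁) ∧
    ∀ j : ℕ, j < N₂ →
      ((idca (ULA I₁ s₁ N₁) (ULA I₂ s₂ N₂)).filter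
        (fun d => g + (j : ℤ) * s₂ ≤ d ∧ d < g + ((j : ℤ) + 1) * s₂)).card = N₁ := by
  have himage := idca_ULA_eq_image I₁ s₁ N₁ I₂ s₂ N₂
  rw [← hg] at himage
  refine ⟨himage, fun j hj => ?_⟩
  have hoffset : ∀ k : ℕ, k < N₁ → 0 ≤ (k : ℤ) * s₁ ∧ (k : ℤ) * s₁ < s₂ := by
    intro k hk
    have hk' : (k : ℤ) ≤ (N₁ : ℤ) - 1 := by omega
    exact ⟨by positivity, (mul_le_mul_of_nonneg_right hk' (by omega)).trans_lt h⟩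
  have hs₂ : 0 < s₂ := by simpa using (hoffset 0 hN₁).2
  have hperiod : (idca (ULA I₁ s₁ N₁) (ULA I₂ s₂ N₂)).filter
      (fun d => g + (j : ℤ) * s₂ ≤ d ∧ d < g + ((j : ℤ) + 1) * s₂) =
      (Finset.range N₁).image (fun k : ℕ => g + (j : ℤ) * s₂ + (k : ℤ) * s₁) := by
    rw [himage]
    ext d
    simp only [Finset.mem_filter, Finset.mem_image, Finset.mem_product, Finset.mem_range,
      Prod.exists]
    constructor
    · rintro ⟨⟨i, k, ⟨-, hk⟩, rfl⟩, hlower, hupper⟩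
      obtain ⟨hk₀, hk₁⟩ := hoffset k hk
      -- The offset `k * s₁` lies in `[0, s₂)`, so the period index `i` is forced to be `j`.
      have hji : (j : ℤ) < i + 1 := lt_of_mul_lt_mul_right (by linarith) hs₂.le
      have hij : (i : ℤ) < j + 1 := lt_of_mul_lt_mul_right (by linarith) hs₂.le
      obtain rfl : i = j := by omega
      exact ⟨k, hk, rfl⟩
    · rintro ⟨k, hk, rfl⟩
      obtain ⟨hk₀, hk₁⟩ := hoffset k hk
      exact ⟨⟨j, k, ⟨hj, hk⟩, rfl⟩, by linarith, by linarith⟩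
  rw [hperiod, Finset.card_image_of_injective, Finset.card_range]
  intro a b hab
  have hs₁' : s₁ ≠ 0 := by omega
  simpa [hs₁'] using hab
end

section
/- Let N_b ≥ 1 and N_t ≥ 2 be integers and let S be the UF-3BL array with parameters N_b, N_t. Then the difference coarray D(S) contains every integer d with |d| ≤ J, where J = 3N_bN_t + 5N_t + 3N_b − 1; i.e., the central consecutive segment of the coarray has at least 2J + 1 elements. -/
/-!
Write `M = 3 * Nb + 5` and split a nonnegative `d ≤ J = M * Nt + 3 * Nb - 1` as `d = k * M + r` with
`0 ≤ r < M`; then `k ≤ Nt`, and `r < 3 * Nb` if `k = Nt`. Name the six sub-ULAs, in order,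
`A, B, T, C, E, F`. The layer `T` has step `M`, so differences against `T` fill whole residue
classes modulo `M`:

* `C - T` gives `r = 3, 6, …, 3 * Nb` and `T - T` gives `r = 0` (blocks `k < Nt`);
* `E - T` gives `r = 1` (blocks `k ≥ 1`) and `r = M - 1` (blocks `k < Nt`);
* `F - T` gives `r = 4, 7, …, 3 * Nb + 1` (blocks `k ≥ 1`);
* `T - A` gives `r = 2, 5, …, 3 * Nb - 1` (blocks `k ≥ 1`);
* `T - B` gives `r = 3 * Nb + 2, 3 * Nb + 3` (blocks `k < Nt`).

The gaps in block `0` are filled by `B - A`, `B - B` and `E - E`, and those in block `Nt` by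
`C - B`. Negative `d` follow by symmetry of the coarray.
-/

/-- Difference coarray of a finite set of sensor positions. -/
def dca (S : Finset ℤ) : Finset ℤ := (S ×ˢ S).image fun p => p.1 - p.2

/-- The UF-3BL sparse array with parameters `Nb` (base-layer sub-ULA size) and
`Nt` (transfer-layer size). -/
def UF3BL (Nb Nt : ℕ) : Finset ℤ :=
  ULA 0 3 Nb ∪
  ULA (3 * (Nb : ℤ) + 1) 1 2 ∪
  ULA (6 * (Nb : ℤ) + 4) (3 * (Nb : ℤ) + 5) Nt ∪
  ULA (3 * (Nb : ℤ) * Nt + 5 * Nt + 3 * Nb + 2) 3 Nb ∪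
  ULA (3 * (Nb : ℤ) * Nt + 5 * Nt + 6 * Nb + 3) 2 2 ∪
  ULA (3 * (Nb : ℤ) * Nt + 5 * Nt + 6 * Nb + 8) 3 Nb

lemma sub_mem_dca {S : Finset ℤ} {p q d : ℤ} (hp : p ∈ S) (hq : q ∈ S) (h : d = p - q) :
    d ∈ dca S := by
  subst h
  exact Finset.mem_image.2 ⟨(p, q), Finset.mem_product.2 ⟨hp, hq⟩, rfl⟩

lemma neg_mem_dca {S : Finset ℤ} {d : ℤ} (h : -d ∈ dca S) : d ∈ dca S := by
  obtain ⟨⟨p, q⟩, hpq, h⟩ := Finset.mem_image.1 h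
  obtain ⟨hp, hq⟩ := Finset.mem_product.1 hpq
  exact sub_mem_dca hq hp (by simp only at h; lia)

lemma mem_ULA (I s : ℤ) {N k : ℕ} (h : k < N) : I + (k : ℤ) * s ∈ ULA I s N :=
  Finset.mem_image.2 ⟨k, Finset.mem_range.2 h, rfl⟩

/-- Nonnegative differences, in the form `k * M + r` with `M = 3 * Nb + 5`. The hypothesis `hlast`
is the bound `d ≤ J` in the last block `k = Nt`. -/
lemma block_mem_dca (Nb Nt k r : ℕ) (hb : 1 ≤ Nb) (ht : 2 ≤ Nt) (hk : k ≤ Nt)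
    (hr : r < 3 * Nb + 5) (hlast : k = Nt → r < 3 * Nb) :
    (k : ℤ) * (3 * Nb + 5) + r ∈ dca (UF3BL Nb Nt) := by
  have hA : ∀ i, i < Nb → (0 : ℤ) + (i : ℤ) * 3 ∈ UF3BL Nb Nt := fun i hi => by
    simp only [UF3BL, Finset.mem_union, mem_ULA _ _ hi, true_or]
  have hB : ∀ i : ℕ, i < 2 → (3 * (Nb : ℤ) + 1) + (i : ℤ) * 1 ∈ UF3BL Nb Nt := fun i hi => by
    simp only [UF3BL, Finset.mem_union, mem_ULA _ _ hi, true_or, or_true]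
  have hT : ∀ i, i < Nt → (6 * (Nb : ℤ) + 4) + (i : ℤ) * (3 * (Nb : ℤ) + 5) ∈ UF3BL Nb Nt :=
    fun i hi => by
      simp only [UF3BL, Finset.mem_union, mem_ULA _ _ hi, true_or, or_true]
  have hC : ∀ i, i < Nb →
      (3 * (Nb : ℤ) * Nt + 5 * Nt + 3 * Nb + 2) + (i : ℤ) * 3 ∈ UF3BL Nb Nt := fun i hi => by
    simp only [UF3BL, Finset.mem_union, mem_ULA _ _ hi, true_or, or_true]
  have hE : ∀ i : ℕ, i < 2 →
      (3 * (Nb : ℤ) * Nt + 5 * Nt + 6 * Nb + 3) + (i : ℤ) * 2 ∈ UF3BL Nb Nt := fun i hi => by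
    simp only [UF3BL, Finset.mem_union, mem_ULA _ _ hi, true_or, or_true]
  have hF : ∀ i, i < Nb →
      (3 * (Nb : ℤ) * Nt + 5 * Nt + 6 * Nb + 8) + (i : ℤ) * 3 ∈ UF3BL Nb Nt := fun i hi => by
    simp only [UF3BL, Finset.mem_union, mem_ULA _ _ hi, or_true]
  obtain ⟨i, rfl | rfl | rfl⟩ : ∃ i, r = 3 * i ∨ r = 3 * i + 1 ∨ r = 3 * i + 2 :=
    ⟨r / 3, by lia⟩
  · rcases hk.eq_or_lt with rfl | hk'
    · have := hlast rfl
      exact sub_mem_dca (hC i (by lia)) (hB 1 (by lia)) (by push_cast; ring)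
    obtain ⟨t, ht'⟩ : ∃ t, Nt = k + 1 + t := ⟨Nt - k - 1, by lia⟩
    rcases i with _ | i
    · exact sub_mem_dca (hT k hk') (hT 0 (by lia)) (by push_cast; ring)
    · rcases (show i ≤ Nb by lia).eq_or_lt with rfl | hi
      · exact sub_mem_dca (hT k hk') (hB 0 (by lia)) (by push_cast; ring)
      · exact sub_mem_dca (hC i hi) (hT t (by lia)) (by rw [ht']; push_cast; ring)
  · rcases (show i ≤ Nb + 1 by lia).eq_or_lt with rfl | hi
    · obtain ⟨t, ht'⟩ : ∃ t, Nt = k + 1 + t := ⟨Nt - k - 1, by lia⟩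
      exact sub_mem_dca (hE 0 (by lia)) (hT t (by lia)) (by rw [ht']; push_cast; ring)
    rcases k with _ | k
    · rcases i with _ | i
      · exact sub_mem_dca (hB 1 (by lia)) (hB 0 (by lia)) (by push_cast; ring)
      · obtain ⟨s, hs⟩ : ∃ s, Nb = i + 1 + s := ⟨Nb - i - 1, by lia⟩
        exact sub_mem_dca (hB 0 (by lia)) (hA s (by lia)) (by rw [hs]; push_cast; ring)
    · obtain ⟨t, ht'⟩ : ∃ t, Nt = k + 1 + t := ⟨Nt - k - 1, by lia⟩
      rcases i with _ | i
      · exact sub_mem_dca (hE 1 (by lia)) (hT t (by lia)) (by rw [ht']; push_cast; ring)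
      · exact sub_mem_dca (hF i (by lia)) (hT t (by lia)) (by rw [ht']; push_cast; ring)
  · rcases (show i ≤ Nb by lia).eq_or_lt with rfl | hi
    · exact sub_mem_dca (hT k (by lia)) (hB 1 (by lia)) (by push_cast; ring)
    obtain ⟨s, hs⟩ : ∃ s, Nb = i + 1 + s := ⟨Nb - i - 1, by lia⟩
    rcases k with _ | k
    · rcases i with _ | i
      · exact sub_mem_dca (hE 1 (by lia)) (hE 0 (by lia)) (by push_cast; ring)
      · exact sub_mem_dca (hB 1 (by lia)) (hA (s + 1) (by lia)) (by rw [hs]; push_cast; ring)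
    · exact sub_mem_dca (hT k (by lia)) (hA s (by lia)) (by rw [hs]; push_cast; ring)

/-- The difference coarray of the UF-3BL array contains every integer `d` with
`|d| ≤ J`, where `J = 3·Nb·Nt + 5·Nt + 3·Nb - 1`. -/
theorem uf3bl_central_segment (Nb Nt : ℕ) (hb : 1 ≤ Nb) (ht : 2 ≤ Nt) :
    ∀ d : ℤ, |d| ≤ 3 * (Nb : ℤ) * Nt + 5 * Nt + 3 * Nb - 1 →
      d ∈ dca (UF3BL Nb Nt) := by
  have key : ∀ n : ℕ, (n : ℤ) ≤ 3 * (Nb : ℤ) * Nt + 5 * Nt + 3 * Nb - 1 →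
      (n : ℤ) ∈ dca (UF3BL Nb Nt) := by
    intro n hn
    have hn' : n < (3 * Nb + 5) * Nt + 3 * Nb := by zify; linarith
    have hdiv := Nat.div_add_mod n (3 * Nb + 5)
    have hr : n % (3 * Nb + 5) < 3 * Nb + 5 := Nat.mod_lt _ (by lia)
    generalize n / (3 * Nb + 5) = k at hdiv
    generalize n % (3 * Nb + 5) = r at hdiv hr
    subst hdiv
    have hk : k ≤ Nt := by
      by_contra! h
      have := Nat.mul_le_mul_left (3 * Nb + 5) (Nat.succ_le_of_lt h)
      rw [Nat.mul_succ] at this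
      lia
    have := block_mem_dca Nb Nt k r hb ht hk hr (by rintro rfl; lia)
    convert this using 1
    push_cast
    ring
  intro d hd
  obtain ⟨n, rfl | rfl⟩ := d.eq_nat_or_neg
  · exact key n (by simpa using hd)
  · exact neg_mem_dca (by simpa using key n (by simpa using hd))
end

section
/- (Optimal parameter selection for UF-3BL) Let N ≥ 17 be an integer. For an integer N_b, set N_t = N − 3N_b − 4 and J(N_b) = 3N_bN_t + 5N_t + 3N_b − 1 = −9N_b² + 3(N − 8)N_b + 5N − 21. Then for every integer N_b, J(N_b) ≤ J(⌊(N − 5)/6⌋); i.e., the choice N_b = ⌊(N − 5)/6⌋ maximizes J. -/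
/-- Optimal parameter selection for UF-3BL: with `N_t = N - 3·N_b - 4` and
`J(N_b) = 3·N_b·N_t + 5·N_t + 3·N_b - 1 = -9·N_b² + 3(N-8)·N_b + 5N - 21`, the
choice `N_b = ⌊(N-5)/6⌋` maximizes `J` over all integers `N_b`. -/
theorem uf3bl_optimal_parameters (N : ℤ) (hN : 17 ≤ N) (J : ℤ → ℤ)
    (hJ : ∀ Nb : ℤ, J Nb = 3 * Nb * (N - 3 * Nb - 4) + 5 * (N - 3 * Nb - 4) + 3 * Nb - 1) :
    (∀ Nb : ℤ, J Nb = -9 * Nb ^ 2 + 3 * (N - 8) * Nb + 5 * N - 21) ∧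
    (∀ Nb : ℤ, J Nb ≤ J ((N - 5) / 6)) := by
  refine ⟨fun Nb => by rw [hJ]; ring, fun Nb => ?_⟩
  -- With `N - 5 = 6 * q + r`, `0 ≤ r ≤ 5` and `d = Nb - q`, the gap is
  -- `J q - J Nb = 3 * d * (3 * d + 3 - r)`, whose two factors never have opposite signs.
  obtain ⟨q, hq⟩ : ∃ q, q = (N - 5) / 6 := ⟨_, rfl⟩
  obtain ⟨r, hr⟩ : ∃ r, r = N - 5 - 6 * q := ⟨_, rfl⟩
  obtain ⟨d, hd⟩ : ∃ d, d = Nb - q := ⟨_, rfl⟩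
  have hr0 : 0 ≤ r := by omega
  have hr5 : r ≤ 5 := by omega
  have gap : J q - J Nb = 3 * (d * (3 * d + 3 - r)) := by
    rw [hJ, hJ, hd, hr]; ring
  have key : 0 ≤ d * (3 * d + 3 - r) := by
    rcases lt_or_ge 0 d with h | h
    · exact mul_nonneg h.le (by omega)
    · rcases h.eq_or_lt with h | h
      · simp [h]
      · exact mul_nonneg_of_nonpos_of_nonpos h.le (by omega)
  rw [← hq]
  linarith
end

section
/- Let N ≥ 17 be an integer, N_b = ⌊(N − 5)/6⌋, and N_t = N − 3N_b − 4. Then the uniform degrees of freedom 2(3N_bN_t + 5N_t + 3N_b − 1) + 1 equals (N² + 4N − 22)/2 if N ≡ 0 or 4 (mod 6), equals (N² + 4N − 19)/2 if N ≡ 1 or 3 (mod 6), equals (N² + 4N − 18)/2 if N ≡ 2 (mod 6), and equals (N² + 4N − 27)/2 if N ≡ 5 (mod 6). -/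
/-- uDOF of the UF-3BL array with optimal parameters: for `N ≥ 17`,
`N_b = ⌊(N-5)/6⌋`, `N_t = N - 3·N_b - 4`, the uniform degrees of freedom
`2·(3·N_b·N_t + 5·N_t + 3·N_b - 1) + 1` is given by the stated closed form
depending on `N mod 6`. -/
theorem uf3bl_udof (N : ℤ) (hN : 17 ≤ N) (Nb Nt : ℤ)
    (hNb : Nb = (N - 5) / 6) (hNt : Nt = N - 3 * Nb - 4) :
    ((N % 6 = 0 ∨ N % 6 = 4) →
      2 * (3 * Nb * Nt + 5 * Nt + 3 * Nb - 1) + 1 = (N ^ 2 + 4 * N - 22) / 2) ∧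
    ((N % 6 = 1 ∨ N % 6 = 3) →
      2 * (3 * Nb * Nt + 5 * Nt + 3 * Nb - 1) + 1 = (N ^ 2 + 4 * N - 19) / 2) ∧
    (N % 6 = 2 →
      2 * (3 * Nb * Nt + 5 * Nt + 3 * Nb - 1) + 1 = (N ^ 2 + 4 * N - 18) / 2) ∧
    (N % 6 = 5 →
      2 * (3 * Nb * Nt + 5 * Nt + 3 * Nb - 1) + 1 = (N ^ 2 + 4 * N - 27) / 2) := by
  -- The residue of `N` modulo 6 fixes `c` in `N = 6 * Nb + c` with `5 ≤ c ≤ 10`; the claim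
  -- is then, after doubling, a polynomial identity in `Nb`, so the division by 2 is exact.
  refine ⟨?_, ?_, ?_, ?_⟩
  · rintro (h | h)
    · obtain rfl : N = 6 * Nb + 6 := by omega
      subst hNt
      refine (Int.ediv_eq_of_eq_mul_right two_ne_zero ?_).symm
      ring
    · obtain rfl : N = 6 * Nb + 10 := by omega
      subst hNt
      refine (Int.ediv_eq_of_eq_mul_right two_ne_zero ?_).symm
      ring
  · rintro (h | h)
    · obtain rfl : N = 6 * Nb + 7 := by omega
      subst hNt
      refine (Int.ediv_eq_of_eq_mul_right two_ne_zero ?_).symm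
      ring
    · obtain rfl : N = 6 * Nb + 9 := by omega
      subst hNt
      refine (Int.ediv_eq_of_eq_mul_right two_ne_zero ?_).symm
      ring
  · intro h
    obtain rfl : N = 6 * Nb + 8 := by omega
    subst hNt
    refine (Int.ediv_eq_of_eq_mul_right two_ne_zero ?_).symm
    ring
  · intro h
    obtain rfl : N = 6 * Nb + 5 := by omega
    subst hNt
    refine (Int.ediv_eq_of_eq_mul_right two_ne_zero ?_).symm
    ring
end

section
/- (Optimal parameter selection for UF-4BL) Let N ≥ 32 be an integer. For an integer N_b, set N_t = N − 4N_b − 6 and J(N_b) = 4N_bN_t + 7N_t + 4N_b + 12 = −16N_b² + 4(N − 12)N_b + 7N − 30. Then for every integer N_b, J(N_b) ≤ J(⌊(N − 8)/8⌋); i.e., the choice N_b = ⌊(N − 8)/8⌋ maximizes J. -/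
/-!
`J` is a concave quadratic in `N_b` with vertex `(N - 12) / 8`, so over the integers it is maximal at
an integer nearest to the vertex, and `⌊(N - 12) / 8 + 1 / 2⌋ = ⌊(N - 8) / 8⌋` is one. Concretely, with
`N - 8 = 8 m + r`, `0 ≤ r ≤ 7` and `d = N_b - m`, one has `J m - J N_b = 4 d (4 d + 4 - r)`, which is
nonnegative for every integer `d`.
-/

/-- Optimal parameter selection for UF-4BL: with `N_t = N - 4·N_b - 6` and
`J(N_b) = 4·N_b·N_t + 7·N_t + 4·N_b + 12 = -16·N_b² + 4(N-12)·N_b + 7N - 30`, the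
choice `N_b = ⌊(N-8)/8⌋` maximizes `J` over all integers `N_b`. -/
theorem uf4bl_optimal_parameters (N : ℤ) (hN : 32 ≤ N) (J : ℤ → ℤ)
    (hJ : ∀ Nb : ℤ, J Nb = 4 * Nb * (N - 4 * Nb - 6) + 7 * (N - 4 * Nb - 6) + 4 * Nb + 12) :
    (∀ Nb : ℤ, J Nb = -16 * Nb ^ 2 + 4 * (N - 12) * Nb + 7 * N - 30) ∧
    (∀ Nb : ℤ, J Nb ≤ J ((N - 8) / 8)) := by
  have hquad : ∀ Nb : ℤ, J Nb = -16 * Nb ^ 2 + 4 * (N - 12) * Nb + 7 * N - 30 := by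
    intro Nb
    rw [hJ]
    ring
  refine ⟨hquad, fun Nb => ?_⟩
  -- Write `N - 8 = 8 m + r` with `0 ≤ r ≤ 7`. The vertex `(N - 12) / 8` of the parabola is
  -- `m + (r - 4) / 8`, so `m` is a nearest integer to it.
  obtain ⟨m, hm⟩ : ∃ m, m = (N - 8) / 8 := ⟨_, rfl⟩
  obtain ⟨r, hr⟩ : ∃ r, r = N - 8 - 8 * m := ⟨_, rfl⟩
  have hr0 : 0 ≤ r := by omega
  have hr7 : r ≤ 7 := by omega
  rw [← hm]
  have hdiff : J m - J Nb = 4 * ((Nb - m) * (4 * (Nb - m) + 4 - r)) := by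
    rw [hquad, hquad, hr]
    ring
  -- Since `Nb - m` is an integer, the two factors never have strictly opposite signs.
  have hnonneg : 0 ≤ (Nb - m) * (4 * (Nb - m) + 4 - r) := by
    rcases le_or_gt Nb m with h | h
    · rcases h.eq_or_lt with rfl | h
      · simp
      · exact mul_nonneg_of_nonpos_of_nonpos (by omega) (by omega)
    · exact mul_nonneg (by omega) (by omega)
  linarith
end
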